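/- arXiv:1412.3025 — 2 statements merged into one kernel-verified Lean document; each statement's English description precedes it below -/
import Mathlib

section
/- Let (M,E,η) be a factorable monoid and x ∈ M with word length N(x) = k. Define x_j = η′(η̄^{j−1}(x)) for 1 ≤ j ≤ k (i.e., split off η′ repeatedly). Then x = x_k·x_{k−1}⋯x_1 with all x_j ∈ E, and the tuple (x_k,…,x_1) is everywhere stable: η(x_{j+1}·x_j) = (x_{j+1}, x_j) for all 1 ≤ j ≤ k−1. -/
/-- The word length of `m` with respect to the generating set `E`:
the least `n` such that `m` is a product of `n` elements of `E`. -/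
noncomputable def wordLength {M : Type*} [Monoid M] (E : Set M) (m : M) : ℕ :=
  sInf {n | ∃ l : List M, (∀ x ∈ l, x ∈ E) ∧ l.length = n ∧ l.prod = m}

/-- `E` is a generating set of the monoid `M`. -/
def IsGenSet {M : Type*} [Monoid M] (E : Set M) : Prop :=
  ∀ m : M, ∃ l : List M, (∀ x ∈ l, x ∈ E) ∧ l.prod = m

/-- The pair `(a, b)` is geodesic with respect to `E`. -/
noncomputable def Geodesic {M : Type*} [Monoid M] (E : Set M) (a b : M) : Prop :=
  wordLength E (a * b) = wordLength E a + wordLength E b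

/-- A factorization map `η = (η̄, η′)` on `(M, E)`. -/
noncomputable def IsFactorizationMap {M : Type*} [Monoid M] (E : Set M)
    (η : M → M × M) : Prop :=
  (∀ m, (η m).1 * (η m).2 = m) ∧
  (∀ m, wordLength E m = wordLength E (η m).1 + wordLength E (η m).2) ∧
  (∀ m, m ≠ 1 → (η m).2 ∈ E) ∧
  η 1 = (1, 1)

/-- The map `f₁ : M³ → M³` applying `η` to the product of the two right entries,
with triples written `(x₃, x₂, x₁)`. -/
def f1 {M : Type*} [Monoid M] (η : M → M × M) (p : M × M × M) : M × M × M :=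
  (p.1, η (p.2.1 * p.2.2))

/-- The map `f₂ : M³ → M³` applying `η` to the product of the two left entries. -/
def f2 {M : Type*} [Monoid M] (η : M → M × M) (p : M × M × M) : M × M × M :=
  ((η (p.1 * p.2.1)).1, (η (p.1 * p.2.1)).2, p.2.2)

/-- The sum of the word lengths of the entries of a triple. -/
noncomputable def tnorm {M : Type*} [Monoid M] (E : Set M) (p : M × M × M) : ℕ :=
  wordLength E p.1 + wordLength E p.2.1 + wordLength E p.2.2

/-- `η` is a factorability structure on `(M, E)`: it is a factorization map and the
three maps `f₁f₂f₁f₂`, `f₂f₁f₂`, `f₂f₁f₂f₁ : M³ → M³` are equal in the graded sense. -/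
noncomputable def IsFactorable {M : Type*} [Monoid M] (E : Set M) (η : M → M × M) : Prop :=
  IsFactorizationMap E η ∧
  ∀ p : M × M × M,
    (f1 η (f2 η (f1 η (f2 η p))) = f2 η (f1 η (f2 η p)) ∧
     f2 η (f1 η (f2 η p)) = f2 η (f1 η (f2 η (f1 η p)))) ∨
    (tnorm E (f1 η (f2 η (f1 η (f2 η p)))) < tnorm E p ∧
     tnorm E (f2 η (f1 η (f2 η p))) < tnorm E p ∧
     tnorm E (f2 η (f1 η (f2 η (f1 η p)))) < tnorm E p)

/-- `η` is a weak factorability structure on `(M, E)`. -/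
noncomputable def IsWeaklyFactorable {M : Type*} [Monoid M] (E : Set M)
    (η : M → M × M) : Prop :=
  IsFactorizationMap E η ∧
  ∀ x : M, ∀ t ∈ E,
    Geodesic E (η x).2 t →
    Geodesic E (η x).1 (η ((η x).2 * t)).1 →
    Geodesic E x t ∧
    (η (x * t)).2 = (η ((η x).2 * t)).2 ∧
    (η (x * t)).1 = (η x).1 * (η ((η x).2 * t)).1

/-- `η` satisfies the recognition principle. -/
def RecognitionPrinciple {M : Type*} [Monoid M] (E : Set M) (η : M → M × M) : Prop :=
  ∀ m : M, ∀ a ∈ E, (η (m * a) = (m, a) ↔ η ((η m).2 * a) = ((η m).2, a))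


theorem wordLength_one {M : Type*} [Monoid M] (E : Set M) : wordLength E (1 : M) = 0 :=
  Nat.sInf_eq_zero.2 (Or.inl ⟨[], by simp⟩)

theorem IsGenSet.eq_one_of_wordLength_eq_zero {M : Type*} [Monoid M] {E : Set M}
    (hgen : IsGenSet E) {m : M} (hm : wordLength E m = 0) : m = 1 := by
  rcases Nat.sInf_eq_zero.1 hm with ⟨l, _, hl, rfl⟩ | h
  · simp [List.length_eq_zero_iff.1 hl]
  · obtain ⟨l, hl, hp⟩ := hgen m
    exact (Set.eq_empty_iff_forall_notMem.1 h l.length ⟨l, hl, rfl, hp⟩).elim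

theorem IsGenSet.wordLength_eq_one {M : Type*} [Monoid M] {E : Set M}
    (hgen : IsGenSet E) (h1 : (1 : M) ∉ E) {a : M} (ha : a ∈ E) : wordLength E a = 1 := by
  have hle : wordLength E a ≤ 1 := Nat.sInf_le ⟨[a], by simpa using ha⟩
  have hne : wordLength E a ≠ 0 := fun h =>
    h1 (hgen.eq_one_of_wordLength_eq_zero h ▸ ha)
  omega

namespace IsFactorizationMap

variable {M : Type*} [Monoid M] {E : Set M} {η : M → M × M}

theorem snd_mem (hη : IsFactorizationMap E η) {m : M} (hm : wordLength E m ≠ 0) :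
    (η m).2 ∈ E :=
  hη.2.2.1 m fun h => hm (h ▸ wordLength_one E)

theorem wordLength_fst (hη : IsFactorizationMap E η) (hgen : IsGenSet E)
    (h1 : (1 : M) ∉ E) {m : M} (hm : wordLength E m ≠ 0) :
    wordLength E m = wordLength E (η m).1 + 1 := by
  rw [hη.2.1 m, hgen.wordLength_eq_one h1 (hη.snd_mem hm)]

theorem apply_of_mem (hη : IsFactorizationMap E η) (hgen : IsGenSet E)
    (h1 : (1 : M) ∉ E) {a : M} (ha : a ∈ E) : η a = (1, a) := by
  have hN := hgen.wordLength_eq_one h1 ha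
  have hfst := hη.wordLength_fst hgen h1 (m := a) (by omega)
  have h : (η a).1 = 1 := hgen.eq_one_of_wordLength_eq_zero (by omega)
  have hmul := hη.1 a
  rw [h, one_mul] at hmul
  exact Prod.ext h hmul

theorem wordLength_iterate_fst (hη : IsFactorizationMap E η) (hgen : IsGenSet E)
    (h1 : (1 : M) ∉ E) (x : M) {n : ℕ} (hn : n ≤ wordLength E x) :
    wordLength E ((fun m => (η m).1)^[n] x) + n = wordLength E x := by
  induction n with
  | zero => simp
  | succ n ih =>
    have ih := ih (by omega)
    have hfst := hη.wordLength_fst hgen h1 (m := (fun m => (η m).1)^[n] x) (by omega)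
    rw [Function.iterate_succ_apply']
    omega

theorem iterate_fst_mul_prod (hη : IsFactorizationMap E η) (x : M) (n : ℕ) :
    (fun m => (η m).1)^[n] x *
      ((List.range n).map fun i => (η ((fun m => (η m).1)^[n - i - 1] x)).2).prod = x := by
  induction n with
  | zero => simp
  | succ n ih =>
    rw [List.range_succ_eq_map, List.map_cons, List.prod_cons, List.map_map,
      Function.iterate_succ_apply', ← mul_assoc]
    simpa [Function.comp_def, hη.1] using ih

end IsFactorizationMap

/-- In a factorable monoid, the two factors split off successively from an element of
positive word length form a stable pair. -/
theorem IsFactorable.stable_snd_fst {M : Type*} [Monoid M] {E : Set M} {η : M → M × M}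
    (hfac : IsFactorable E η) (hgen : IsGenSet E) (h1 : (1 : M) ∉ E) {y : M}
    (hy : wordLength E y ≠ 0) :
    η ((η (η y).1).2 * (η y).2) = ((η (η y).1).2, (η y).2) := by
  obtain ⟨hη, hp⟩ := hfac
  have ha := hη.apply_of_mem hgen h1 (hη.snd_mem hy)
  -- On `(η̄ y, η′ y, 1)` the map `f₂f₁f₂` yields `(η (η̄ y), η′ y)`, of the same norm.
  have hf : f2 η (f1 η (f2 η ((η y).1, (η y).2, 1))) =
      ((η (η y).1).1, (η (η y).1).2, (η y).2) := by
    simp [f1, f2, hη.1, ha]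
  rcases hp ((η y).1, (η y).2, 1) with ⟨h, _⟩ | ⟨_, h, _⟩
  · rw [hf] at h
    simpa [f1] using h
  · rw [hf] at h
    have hN := hη.2.1 (η y).1
    simp only [tnorm, wordLength_one] at h
    omega

/-- Let `(M, E, η)` be a factorable monoid and `x ∈ M` with word length `N(x) = k`.
Define `x_j = η′(η̄^{j−1}(x))` for `1 ≤ j ≤ k`. Then `x = x_k ⋯ x_1` with all `x_j ∈ E`,
and the tuple `(x_k, …, x_1)` is everywhere stable:
`η(x_{j+1}·x_j) = (x_{j+1}, x_j)` for all `1 ≤ j ≤ k−1`. -/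
theorem normalForm_everywhere_stable
    {M : Type*} [Monoid M] (E : Set M) (h1 : (1 : M) ∉ E) (hgen : IsGenSet E)
    (η : M → M × M) (hfac : IsFactorable E η)
    (x : M) (k : ℕ) (hk : wordLength E x = k)
    (xs : ℕ → M) (hxs : ∀ j, xs j = (η ((fun m => (η m).1)^[j - 1] x)).2) :
    (∀ j, 1 ≤ j → j ≤ k → xs j ∈ E) ∧
    ((List.range k).map (fun i => xs (k - i))).prod = x ∧
    (∀ j, 1 ≤ j → j + 1 ≤ k → η (xs (j + 1) * xs j) = (xs (j + 1), xs j)) := by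
  obtain rfl : xs = fun j => (η ((fun m => (η m).1)^[j - 1] x)).2 := funext hxs
  have hη := hfac.1
  have hlen : ∀ j, 1 ≤ j → j ≤ k → wordLength E ((fun m => (η m).1)^[j - 1] x) ≠ 0 := by
    intro j hj hjk
    have := hη.wordLength_iterate_fst hgen h1 x (n := j - 1) (by omega)
    omega
  refine ⟨fun j hj hjk => hη.snd_mem (hlen j hj hjk), ?_, fun j hj hjk => ?_⟩
  · have hend : (fun m => (η m).1)^[k] x = 1 := by
      refine hgen.eq_one_of_wordLength_eq_zero ?_
      have := hη.wordLength_iterate_fst hgen h1 x hk.ge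
      omega
    simpa [hend] using hη.iterate_fst_mul_prod x k
  · have hstep : (fun m => (η m).1)^[j + 1 - 1] x = (η ((fun m => (η m).1)^[j - 1] x)).1 := by
      rw [show j + 1 - 1 = (j - 1) + 1 by omega, Function.iterate_succ_apply']
    simp only [hstep]
    exact hfac.stable_snd_fst hgen h1 (hlen j hj (by omega))
end

section
/- For every n ≥ 1, in the monoid Q_n' the following equivalences hold: I₁ⁿ·I₁ⁿ ∼ I₂ⁿ·I₁ⁿ, and more generally the n-fold power (I₁ⁿ)ⁿ is ∼-equivalent to D_n = I_nⁿ·I_{n−1}ⁿ⋯I₂ⁿ·I₁ⁿ. -/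
/-- `w` is a word of the free monoid `F_n` on the letters `{1, …, n}`. -/
def InF (n : ℕ) (w : List ℕ) : Prop := ∀ a ∈ w, 1 ≤ a ∧ a ≤ n

/-- The congruence on a free monoid of words generated by a relation `r`. -/
inductive CongClosure (r : List ℕ → List ℕ → Prop) : List ℕ → List ℕ → Prop
  | rel (u v : List ℕ) {x y : List ℕ} : r x y → CongClosure r (u ++ x ++ v) (u ++ y ++ v)
  | refl (x : List ℕ) : CongClosure r x x
  | symm {x y : List ℕ} : CongClosure r x y → CongClosure r y x
  | trans {x y z : List ℕ} : CongClosure r x y → CongClosure r y z → CongClosure r x z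

/-- The defining relations of `P_n`: `ab = ba` for `|a − b| ≥ 2`, and `aa = a`. -/
inductive PRel (n : ℕ) : List ℕ → List ℕ → Prop
  | comm (a b : ℕ) : 1 ≤ a → a ≤ n → 1 ≤ b → b ≤ n → (a + 2 ≤ b ∨ b + 2 ≤ a) →
      PRel n [a, b] [b, a]
  | idem (a : ℕ) : 1 ≤ a → a ≤ n → PRel n [a, a] [a]

/-- The congruence `∼_P` on `F_n`. -/
def PCong (n : ℕ) : List ℕ → List ℕ → Prop := CongClosure (PRel n)

/-- The defining relations of `Q_n`: those of `P_n` together with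
`k(k+1)k(k+1) = (k+1)k(k+1)` and `(k+1)k(k+1)k = (k+1)k(k+1)`. -/
inductive QRel (n : ℕ) : List ℕ → List ℕ → Prop
  | ofP {x y : List ℕ} : PRel n x y → QRel n x y
  | braid1 (k : ℕ) : 1 ≤ k → k + 1 ≤ n → QRel n [k, k + 1, k, k + 1] [k + 1, k, k + 1]
  | braid2 (k : ℕ) : 1 ≤ k → k + 1 ≤ n → QRel n [k + 1, k, k + 1, k] [k + 1, k, k + 1]

/-- The congruence `∼_Q` on `F_n`. -/
def QCong (n : ℕ) : List ℕ → List ℕ → Prop := CongClosure (QRel n)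

/-- The defining relations of `Q_n'`: those of `Q_n` together with the pairs `(kJ, J)`
for which there exists `I ∈ F_n` with `kIJ ∼_Q IJ`, `kI ∼_P Ik` and `k` not occurring
in `I`. -/
inductive RRel (n : ℕ) : List ℕ → List ℕ → Prop
  | ofQ {x y : List ℕ} : QRel n x y → RRel n x y
  | absorb (k : ℕ) (I J : List ℕ) : 1 ≤ k → k ≤ n → InF n I → InF n J →
      QCong n ((k :: I) ++ J) (I ++ J) → PCong n (k :: I) (I ++ [k]) → k ∉ I →
      RRel n (k :: J) J

/-- The congruence `∼` on `F_n`; the quotient monoid `F_n/∼` is `Q_n'`. -/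
def RCong (n : ℕ) : List ℕ → List ℕ → Prop := CongClosure (RRel n)

/-- The shift homomorphism `sh_k : F_{n−k} → F_n`, `i ↦ i + k`. -/
def sh (k : ℕ) (w : List ℕ) : List ℕ := w.map (· + k)

/-- The word `I_a^b = a·(a+1)⋯b`. -/
def Iseg (a b : ℕ) : List ℕ := List.range' a (b + 1 - a)

/-- The word `D_k = I_k^k · I_{k−1}^k ⋯ I_2^k · I_1^k`. -/
def Dword (k : ℕ) : List ℕ := ((List.range k).map (fun i => Iseg (k - i) k)).flatten

namespace CongClosure

variable {r : List ℕ → List ℕ → Prop}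

theorem append_left (u : List ℕ) {x y : List ℕ} (h : CongClosure r x y) :
    CongClosure r (u ++ x) (u ++ y) := by
  induction h with
  | rel a b h => simpa only [List.append_assoc] using rel (u ++ a) b h
  | refl x => exact refl _
  | symm _ ih => exact ih.symm
  | trans _ _ ih₁ ih₂ => exact ih₁.trans ih₂

theorem append_right (v : List ℕ) {x y : List ℕ} (h : CongClosure r x y) :
    CongClosure r (x ++ v) (y ++ v) := by
  induction h with
  | rel a b h => simpa only [List.append_assoc] using rel a (b ++ v) h
  | refl x => exact refl _
  | symm _ ih => exact ih.symm
  | trans _ _ ih₁ ih₂ => exact ih₁.trans ih₂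

variable (r) in
/-- The generated congruence as a `Con` on the free monoid. -/
def con : Con (FreeMonoid ℕ) where
  r u v := CongClosure r u.toList v.toList
  iseqv := ⟨fun _ => refl _, fun h => h.symm, fun h₁ h₂ => h₁.trans h₂⟩
  mul' h₁ h₂ := (h₁.append_right _).trans (h₂.append_left _)

variable (r) in
/-- The class of a letter in the quotient monoid. -/
def letter (k : ℕ) : (con r).Quotient := (FreeMonoid.of k : FreeMonoid ℕ)

theorem prod_map_letter (w : List ℕ) :
    (w.map (letter r)).prod = ((FreeMonoid.ofList w : FreeMonoid ℕ) : (con r).Quotient) := by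
  induction w with
  | nil => rfl
  | cons a w ih =>
    rw [List.map_cons, List.prod_cons, ih, FreeMonoid.ofList_cons, Con.coe_mul, letter]

theorem iff_prod_eq {u v : List ℕ} :
    CongClosure r u v ↔ (u.map (letter r)).prod = (v.map (letter r)).prod := by
  rw [prod_map_letter, prod_map_letter, Con.eq]
  rfl

theorem prod_eq_of_rel {u v : List ℕ} (h : r u v) :
    (u.map (letter r)).prod = (v.map (letter r)).prod :=
  iff_prod_eq.1 (by simpa using rel [] [] h)

end CongClosure

/-- The word `I_n^n · I_{n-1}^n ⋯ I_{n-d+1}^n`. -/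
def stair (n d : ℕ) : List ℕ := ((List.range d).map (fun i => Iseg (n - i) n)).flatten

theorem stair_succ (n d : ℕ) : stair n (d + 1) = stair n d ++ Iseg (n - d) n := by
  simp [stair, List.range_succ]

theorem mem_Iseg {a b k : ℕ} : k ∈ Iseg a b ↔ a ≤ k ∧ k ≤ b := by
  simp only [Iseg, List.mem_range'_1]
  omega

theorem Iseg_cons {a b : ℕ} (h : a ≤ b) : Iseg a b = a :: Iseg (a + 1) b := by
  rw [Iseg, Iseg, show b + 1 - a = (b + 1 - (a + 1)) + 1 by omega, List.range'_succ]

theorem mem_stair {n d k : ℕ} (h : k ∈ stair n d) : n < k + d ∧ k ≤ n := by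
  simp only [stair, List.mem_flatten, List.mem_map, List.mem_range] at h
  obtain ⟨_, ⟨i, hi, rfl⟩, hk⟩ := h
  rw [mem_Iseg] at hk
  omega

section Monoid

variable {M : Type*} [Monoid M] {x : ℕ → M}

theorem mul_prod_map_of_absorb {e : M} {w : List ℕ} (h : ∀ k ∈ w, e * x k = e) :
    e * (w.map x).prod = e := by
  induction w with
  | nil => simp
  | cons a w ih =>
    rw [List.map_cons, List.prod_cons, ← mul_assoc, h a (by simp),
      ih fun k hk => h k (by simp [hk])]

theorem prod_map_mul_of_absorb {e : M} {w : List ℕ} (h : ∀ k ∈ w, x k * e = e) :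
    (w.map x).prod * e = e := by
  induction w with
  | nil => simp
  | cons a w ih =>
    rw [List.map_cons, List.prod_cons, mul_assoc, ih fun k hk => h k (by simp [hk]),
      h a (by simp)]

theorem commute_prod_map {a : ℕ} {w : List ℕ} (h : ∀ k ∈ w, Commute (x a) (x k)) :
    Commute (x a) (w.map x).prod :=
  Commute.list_prod_right _ _ (by simpa using h)

/-- In any monoid satisfying the relations of `Q_n`, the element `stair n d` is a zero for the
letters `n - d + 1, …, n`. -/
theorem stair_absorb {n : ℕ}
    (comm : ∀ a b, 1 ≤ a → a + 2 ≤ b → b ≤ n → Commute (x a) (x b))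
    (idem : ∀ a, 1 ≤ a → a ≤ n → x a * x a = x a)
    (braid₁ : ∀ k, 1 ≤ k → k + 1 ≤ n →
      x k * (x (k + 1) * (x k * x (k + 1))) = x (k + 1) * (x k * x (k + 1)))
    (braid₂ : ∀ k, 1 ≤ k → k + 1 ≤ n →
      x (k + 1) * (x k * (x (k + 1) * x k)) = x (k + 1) * (x k * x (k + 1)))
    (d : ℕ) (hd : d + 1 ≤ n) :
    (∀ k, n ≤ k + d → k ≤ n →
      x k * ((stair n (d + 1)).map x).prod = ((stair n (d + 1)).map x).prod ∧
      ((stair n (d + 1)).map x).prod * x k = ((stair n (d + 1)).map x).prod) ∧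
    ((stair n (d + 1)).map x).prod =
      ((stair n d).map x).prod * (x (n - d) * ((stair n d).map x).prod) := by
  induction d with
  | zero =>
    have h : ((stair n (0 + 1)).map x).prod = x n := by
      simp [stair, Iseg]
    refine ⟨fun k h₁ h₂ => ?_, ?_⟩
    · obtain rfl : k = n := by omega
      rw [h]
      exact ⟨idem k hd le_rfl, idem k hd le_rfl⟩
    · rw [h]
      simp [stair]
  | succ c ih =>
    obtain ⟨absorb, e_eq⟩ := ih (by omega)
    obtain ⟨a, ha⟩ : ∃ a, a = n - (c + 1) := ⟨_, rfl⟩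
    have ha' : n - c = a + 1 := by omega
    have e_seg : ((stair n (c + 1)).map x).prod =
        ((stair n c).map x).prod * ((Iseg (a + 1) n).map x).prod := by
      rw [stair_succ, ha', List.map_append, List.prod_append]
    have e_mul_f : ((stair n (c + 1)).map x).prod * ((stair n c).map x).prod =
        ((stair n (c + 1)).map x).prod := by
      refine mul_prod_map_of_absorb fun k hk => ?_
      have := mem_stair hk
      exact (absorb k (by omega) (by omega)).2
    have f_mul_e : ((stair n c).map x).prod * ((stair n (c + 1)).map x).prod =
        ((stair n (c + 1)).map x).prod := by
      refine prod_map_mul_of_absorb fun k hk => ?_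
      have := mem_stair hk
      exact (absorb k (by omega) (by omega)).1
    have f_comm : x a * ((stair n c).map x).prod = ((stair n c).map x).prod * x a := by
      refine commute_prod_map fun k hk => ?_
      have := mem_stair hk
      exact comm _ _ (by omega) (by omega) (by omega)
    have s_seg : ((stair n (c + 1 + 1)).map x).prod = ((stair n (c + 1)).map x).prod *
        (x a * ((Iseg (a + 1) n).map x).prod) := by
      rw [stair_succ, ← ha, Iseg_cons (by omega : a ≤ n), List.map_append, List.prod_append,
        List.map_cons, List.prod_cons]
    have absorb_b := absorb (a + 1) (by omega) (by omega)
    have b₁ := braid₁ a (by omega) (by omega)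
    have b₂ := braid₂ a (by omega) (by omega)
    rw [ha'] at e_eq
    rw [← ha]
    generalize ((stair n (c + 1 + 1)).map x).prod = s at *
    generalize ((stair n (c + 1)).map x).prod = e at *
    generalize ((stair n c).map x).prod = f at *
    generalize ((Iseg (a + 1) n).map x).prod = w at *
    obtain ⟨be, eb⟩ := absorb_b
    have s_eq : s = e * (x a * e) := by
      rw [s_seg]
      nth_rw 1 [← e_mul_f]
      rw [mul_assoc, ← mul_assoc f, ← f_comm, mul_assoc, ← e_seg]
    refine ⟨fun k h₁ h₂ => ?_, s_eq⟩
    by_cases hk : k = a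
    · rw [hk, s_eq]
      have fbae : e * (x a * e) = f * (x (a + 1) * (x a * e)) := by
        calc e * (x a * e)
            = f * (x (a + 1) * ((f * x a) * e)) := by
              nth_rw 1 [e_eq]
              simp only [mul_assoc]
          _ = f * (x (a + 1) * (x a * e)) := by rw [← f_comm, mul_assoc, f_mul_e]
      constructor
      · calc x a * (e * (x a * e))
            = x a * (f * (x (a + 1) * (x a * e))) := by rw [fbae]
          _ = f * (x a * (x (a + 1) * (x a * (x (a + 1) * e)))) := by
            rw [← mul_assoc, f_comm, mul_assoc, be]
          _ = f * ((x a * (x (a + 1) * (x a * x (a + 1)))) * e) := by simp only [mul_assoc]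
          _ = f * (x (a + 1) * (x a * (x (a + 1) * e))) := by rw [b₁]; simp only [mul_assoc]
          _ = e * (x a * e) := by rw [be, fbae]
      · have eab : e * (x a * (x (a + 1) * f)) = e * (x a * e) := by
          calc e * (x a * (x (a + 1) * f))
              = (e * f) * (x a * (x (a + 1) * f)) := by rw [e_mul_f]
            _ = e * ((f * x a) * (x (a + 1) * f)) := by simp only [mul_assoc]
            _ = e * (x a * (f * (x (a + 1) * f))) := by rw [← f_comm]; simp only [mul_assoc]
            _ = e * (x a * e) := by rw [← e_eq]
        calc e * (x a * e) * x a
            = e * (x a * (x (a + 1) * (f * x a))) := by rw [← eab]; simp only [mul_assoc]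
          _ = (e * x (a + 1)) * (x a * (x (a + 1) * (x a * f))) := by rw [← f_comm, eb]
          _ = e * ((x (a + 1) * (x a * (x (a + 1) * x a))) * f) := by simp only [mul_assoc]
          _ = (e * x (a + 1)) * (x a * (x (a + 1) * f)) := by rw [b₂]; simp only [mul_assoc]
          _ = e * (x a * e) := by rw [eb, eab]
    · have := absorb k (by omega) h₂
      rw [s_eq]
      constructor
      · rw [← mul_assoc, this.1]
      · rw [mul_assoc, mul_assoc, this.2]

theorem pow_succ_eq_of_sq_eq {u v : M} (h : u * u = v * u) (m : ℕ) :
    u ^ (m + 1) = v ^ m * u := by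
  induction m with
  | zero => simp
  | succ m ih => rw [pow_succ, ih, mul_assoc, h, ← mul_assoc, ← pow_succ]

end Monoid

theorem QCong_cons_stair {n d : ℕ} (hd : d + 1 ≤ n) :
    QCong n ((n - d) :: stair n (d + 1)) (stair n (d + 1)) := by
  rw [QCong, CongClosure.iff_prod_eq, List.map_cons, List.prod_cons]
  refine ((stair_absorb ?_ ?_ ?_ ?_ d hd).1 (n - d) (by omega) (by omega)).1
  · intro a b h₁ h₂ h₃
    simpa [commute_iff_eq] using CongClosure.prod_eq_of_rel (QRel.ofP
      (PRel.comm a b h₁ (by omega) (by omega) h₃ (Or.inl h₂)))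
  · intro a h₁ h₂
    simpa using CongClosure.prod_eq_of_rel (QRel.ofP (PRel.idem a h₁ h₂))
  · intro k h₁ h₂
    simpa using CongClosure.prod_eq_of_rel (QRel.braid1 k h₁ h₂)
  · intro k h₁ h₂
    simpa using CongClosure.prod_eq_of_rel (QRel.braid2 k h₁ h₂)

theorem PCong_cons_of_far {n a : ℕ} {w : List ℕ} (ha : 1 ≤ a) (hw : ∀ k ∈ w, a + 2 ≤ k ∧ k ≤ n) :
    PCong n (a :: w) (w ++ [a]) := by
  rw [PCong, CongClosure.iff_prod_eq, List.map_cons, List.prod_cons, List.map_append,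
    List.prod_append, List.map_singleton, List.prod_singleton]
  refine commute_prod_map fun k hk => ?_
  obtain ⟨h₁, h₂⟩ := hw k hk
  simpa [commute_iff_eq] using CongClosure.prod_eq_of_rel
    (PRel.comm a k ha (by omega) (by omega) h₂ (Or.inl h₁))

/-- In `Q_n'`, the word `I_{a+1}^n · I_a^n` absorbs the letter `a` on its left. -/
theorem RRel_cons_Iseg_append {n a : ℕ} (ha : 1 ≤ a) (han : a ≤ n) :
    RRel n (a :: (Iseg (a + 1) n ++ Iseg a n)) (Iseg (a + 1) n ++ Iseg a n) := by
  have hI : ∀ k ∈ stair n (n - a - 1), a + 2 ≤ k ∧ k ≤ n := fun k hk => by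
    have := mem_stair hk
    omega
  have hstair : stair n (n - a) = stair n (n - a - 1) ++ Iseg (a + 1) n := by
    rcases han.eq_or_lt with rfl | hlt
    · simp [stair, Iseg]
    · obtain ⟨c, hc⟩ : ∃ c, n - a = c + 1 := ⟨n - a - 1, by omega⟩
      rw [hc, stair_succ, Nat.add_sub_cancel, show n - c = a + 1 by omega]
  refine RRel.absorb a (stair n (n - a - 1)) _ ha han ?_ ?_ ?_ (PCong_cons_of_far ha hI) ?_
  · intro k hk
    have := hI k hk
    omega
  · intro k hk
    simp only [List.mem_append, mem_Iseg] at hk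
    omega
  · have h := QCong_cons_stair (n := n) (d := n - a) (by omega)
    rw [stair_succ, hstair, Nat.sub_sub_self han] at h
    simpa using h
  · intro h
    have := hI a h
    omega

theorem RCong_Iseg_sq {n a : ℕ} (ha : 1 ≤ a) (han : a ≤ n) :
    RCong n (Iseg a n ++ Iseg a n) (Iseg (a + 1) n ++ Iseg a n) := by
  have h := CongClosure.rel [] [] (RRel_cons_Iseg_append ha han)
  rw [List.nil_append, List.append_nil, ← List.cons_append, ← Iseg_cons han,
    List.nil_append, List.append_nil] at h
  exact h

theorem RCong_Iseg_pow_stair {n d : ℕ} (hd : d + 1 ≤ n) :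
    RCong n (List.replicate (d + 1) (Iseg (n - d) n)).flatten (stair n (d + 1)) := by
  have prod_replicate (m : ℕ) (w : List ℕ) :
      ((List.replicate m w).flatten.map (CongClosure.letter (RRel n))).prod =
        (w.map (CongClosure.letter (RRel n))).prod ^ m := by
    simp [List.map_flatten, List.prod_flatten]
  rw [RCong, CongClosure.iff_prod_eq, prod_replicate]
  induction d with
  | zero => simp [stair]
  | succ d ih =>
    have h := CongClosure.iff_prod_eq.1 (RCong_Iseg_sq (n := n) (a := n - (d + 1))
      (by omega) (by omega))
    simp only [List.map_append, List.prod_append] at h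
    rw [show n - (d + 1) + 1 = n - d by omega] at h
    rw [pow_succ_eq_of_sq_eq h, ih (by omega), stair_succ n (d + 1), List.map_append,
      List.prod_append]

/-- For every `n ≥ 1`, in `Q_n'` one has `I₁ⁿ·I₁ⁿ ∼ I₂ⁿ·I₁ⁿ`, and the `n`-fold power
`(I₁ⁿ)ⁿ` is `∼`-equivalent to `D_n = I_nⁿ·I_{n−1}ⁿ⋯I₂ⁿ·I₁ⁿ`. -/
theorem Iseg_pow_equiv_D (n : ℕ) (hn : 1 ≤ n) :
    RCong n (Iseg 1 n ++ Iseg 1 n) (Iseg 2 n ++ Iseg 1 n) ∧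
    RCong n ((List.replicate n (Iseg 1 n)).flatten) (Dword n) := by
  refine ⟨RCong_Iseg_sq le_rfl hn, ?_⟩
  obtain ⟨d, rfl⟩ : ∃ d, n = d + 1 := ⟨n - 1, by omega⟩
  have h := RCong_Iseg_pow_stair (le_refl (d + 1))
  rw [Nat.add_sub_cancel_left] at h
  exact h
end
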